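/- There exists a constant C₁ > 1 such that for every integer x ≥ 2 and every element W of N(∞) with |W| ≤ x, W can be written as a product of at most C₁·x²·log₂(x) conjugates of elements of R(∞) ∪ R(∞)⁻¹. That is, the Dehn 2-function of the Lysenok presentation of the Grigorchuk 2-group Γ is bounded from above by C₁ x² log₂ x. -/

import Mathlib

/-!
A word `W` representing the trivial element of the Grigorchuk group fixes the first level of the
binary tree, so at linear cost it becomes a word in `c`, `aca`, `d`, `ada`. Here `c` and `aca`
generate a quotient of the dihedral group of order 8, and every conjugate of `d` by an element of
that group commutes with every conjugate of `ada`. Hence, at quadratic cost, `W` splits into the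
word obtained by erasing all letters `ada` and the one obtained by erasing all letters `d`. Up to
conjugation by `a` and a linear cost, these are the images under `σ` of the two components of `W`
under the wreath recursion, which are trivial in the group and half as long as `W`.

The substitution `σ` maps each relator other than `a²` to a conjugate of a relator and `a²` to
`acaaca`, a product of conjugates of two `a²` and one `c²`. If the relator `a²` is counted
separately, `σ` therefore at most doubles both counts, and the cost `T` of words of length `n`
satisfies `T(n) ≤ 4 T(n / 2 + O(1)) + O(n²)`, that is `T(n) = O(n² log n)`.
-/

/-- The four-letter alphabet `{a, b, c, d}`. -/
inductive L4 : Type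
  | a | b | c | d
  deriving DecidableEq

/-- The free group `F = F(a, b, c, d)`. -/
abbrev F4 : Type := FreeGroup L4

def ga : F4 := FreeGroup.of L4.a
def gb : F4 := FreeGroup.of L4.b
def gc : F4 := FreeGroup.of L4.c
def gd : F4 := FreeGroup.of L4.d

/-- The endomorphism `σ` of `F(a,b,c,d)`:
`σ(a) = aca`, `σ(b) = d`, `σ(c) = b`, `σ(d) = c`. -/
def sigma : F4 →* F4 :=
  FreeGroup.lift fun x => match x with
    | L4.a => ga * gc * ga
    | L4.b => gd
    | L4.c => gb
    | L4.d => gc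

/-- The Lysenok relator set
`R(∞) = {a², b², c², d², bcd} ∪ {σⁱ((ad)⁴) : i ≥ 0} ∪ {σⁱ((adacac)⁴) : i ≥ 0}`. -/
def Rinf : Set F4 :=
  {ga ^ 2, gb ^ 2, gc ^ 2, gd ^ 2, gb * gc * gd}
    ∪ {w | ∃ i : ℕ, w = (⇑sigma)^[i] ((ga * gd) ^ 4)}
    ∪ {w | ∃ i : ℕ, w = (⇑sigma)^[i] ((ga * gd * ga * gc * ga * gc) ^ 4)}

/-- `W` is a product of `L` conjugates of elements of `R ∪ R⁻¹`. -/
def IsProdConjPM {G : Type*} [Group G] (R : Set G) (L : ℕ) (W : G) : Prop :=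
  ∃ f : Fin L → G,
    (∀ j, ∃ x r, r ∈ R ∧ (f j = x * r * x⁻¹ ∨ f j = x * r⁻¹ * x⁻¹)) ∧
    W = (List.ofFn f).prod

/-! ### Products of conjugates of relators -/

namespace IsProdConjPM

variable {G : Type*} [Group G] {R : Set G} {L M : ℕ} {u v : G}

theorem one : IsProdConjPM R 0 (1 : G) :=
  ⟨Fin.elim0, fun j => j.elim0, by simp⟩

theorem of_mem (hu : u ∈ R) : IsProdConjPM R 1 u :=
  ⟨fun _ => u, fun _ => ⟨1, u, hu, .inl (by simp)⟩, by simp⟩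

theorem mul (hu : IsProdConjPM R L u) (hv : IsProdConjPM R M v) :
    IsProdConjPM R (L + M) (u * v) := by
  obtain ⟨f, hf, rfl⟩ := hu
  obtain ⟨g, hg, rfl⟩ := hv
  refine ⟨Fin.append f g, fun j => ?_, by rw [List.ofFn_fin_append, List.prod_append]⟩
  induction j using Fin.addCases with
  | left i => simpa only [Fin.append_left] using hf i
  | right i => simpa only [Fin.append_right] using hg i

theorem conj (hu : IsProdConjPM R L u) (g : G) : IsProdConjPM R L (g * u * g⁻¹) := by
  obtain ⟨f, hf, rfl⟩ := hu
  refine ⟨fun j => g * f j * g⁻¹, fun j => ?_, ?_⟩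
  · obtain ⟨x, r, hr, h | h⟩ := hf j
    · exact ⟨g * x, r, hr, .inl (by simp only [h]; group)⟩
    · exact ⟨g * x, r, hr, .inr (by simp only [h]; group)⟩
  · simpa [Function.comp_def] using map_list_prod (MulAut.conj g) (List.ofFn f)

theorem inv (hu : IsProdConjPM R L u) : IsProdConjPM R L u⁻¹ := by
  obtain ⟨f, hf, rfl⟩ := hu
  refine ⟨fun j => (f j.rev)⁻¹, fun j => ?_, ?_⟩
  · obtain ⟨x, r, hr, h | h⟩ := hf j.rev
    · exact ⟨x, r, hr, .inr (by simp only [h]; group)⟩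
    · exact ⟨x, r, hr, .inl (by simp only [h]; group)⟩
  · rw [List.prod_inv_reverse]
    congr 1
    refine List.ext_getElem (by simp) fun i _ _ => ?_
    simp only [List.getElem_reverse, List.getElem_map, List.getElem_ofFn, List.length_map,
      List.length_ofFn]
    congr 3
    lia

end IsProdConjPM

/-- `FillDistLE R S p q u v` says that the word `u` can be transformed into `v` by at most `p`
applications of relators from `R` and `q` applications of relators from `S`. Counting the two kinds
of relators separately keeps track of how an endomorphism changes the cost. -/
inductive FillDistLE {G : Type*} [Group G] (R S : Set G) : ℕ → ℕ → G → G → Prop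
  | refl (u : G) : FillDistLE R S 0 0 u u
  | of_mem_left {r : G} : r ∈ R → FillDistLE R S 1 0 r 1
  | of_mem_right {s : G} : s ∈ S → FillDistLE R S 0 1 s 1
  | symm {p q : ℕ} {u v : G} : FillDistLE R S p q u v → FillDistLE R S p q v u
  | trans {p q p' q' : ℕ} {u v w : G} : FillDistLE R S p q u v → FillDistLE R S p' q' v w →
      FillDistLE R S (p + p') (q + q') u w
  | mul {p q p' q' : ℕ} {u v u' v' : G} : FillDistLE R S p q u v → FillDistLE R S p' q' u' v' →
      FillDistLE R S (p + p') (q + q') (u * u') (v * v')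
  | mono {p q p' q' : ℕ} {u v : G} : FillDistLE R S p q u v → p ≤ p' → q ≤ q' →
      FillDistLE R S p' q' u v

namespace FillDistLE

variable {G H Q : Type*} [Group G] [Group H] [Group Q] {R S : Set G} {p q : ℕ} {u v : G}

theorem of_eq (h : u = v) : FillDistLE R S 0 0 u v :=
  h ▸ refl u

theorem mul_left (h : FillDistLE R S p q u v) (g : G) : FillDistLE R S p q (g * u) (g * v) := by
  simpa only [zero_add] using (refl g).mul h

theorem mul_right (h : FillDistLE R S p q u v) (g : G) : FillDistLE R S p q (u * g) (v * g) :=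
  h.mul (refl g)

theorem list_prod {ι : Type*} {f g : ι → G} (h : ∀ i, FillDistLE R S p q (f i) (g i)) :
    ∀ l : List ι, FillDistLE R S (p * l.length) (q * l.length) (l.map f).prod (l.map g).prod
  | [] => refl 1
  | i :: l => by
    simpa only [List.map_cons, List.prod_cons, List.length_cons, Nat.mul_succ, add_comm]
      using (h i).mul (list_prod h l)

theorem exists_isProdConjPM (h : FillDistLE R S p q u v) :
    ∃ L ≤ p + q, IsProdConjPM (R ∪ S) L (u * v⁻¹) := by
  induction h with
  | refl u => exact ⟨0, le_rfl, by simpa only [mul_inv_cancel] using .one⟩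
  | of_mem_left hr => exact ⟨1, le_rfl, by simpa only [inv_one, mul_one] using .of_mem (.inl hr)⟩
  | of_mem_right hs => exact ⟨1, le_rfl, by simpa only [inv_one, mul_one] using .of_mem (.inr hs)⟩
  | symm _ ih =>
    obtain ⟨L, hL, h⟩ := ih
    exact ⟨L, hL, by simpa only [mul_inv_rev, inv_inv] using h.inv⟩
  | @trans _ _ _ _ u v w _ _ ih ih' =>
    obtain ⟨L, hL, h⟩ := ih
    obtain ⟨L', hL', h'⟩ := ih'
    refine ⟨L + L', by lia, ?_⟩
    convert h.mul h' using 1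
    group
  | @mul _ _ _ _ u v u' v' _ _ ih ih' =>
    obtain ⟨L, hL, h⟩ := ih
    obtain ⟨L', hL', h'⟩ := ih'
    refine ⟨L' + L, by lia, ?_⟩
    convert (h'.conj u).mul h using 1
    group
  | mono _ hp hq ih =>
    obtain ⟨L, hL, h⟩ := ih
    exact ⟨L, by lia, h⟩

theorem map (f : G →* H) {R' S' : Set H} {a b c d : ℕ}
    (hR : ∀ r ∈ R, FillDistLE R' S' a b (f r) 1) (hS : ∀ s ∈ S, FillDistLE R' S' c d (f s) 1)
    (h : FillDistLE R S p q u v) :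
    FillDistLE R' S' (a * p + c * q) (b * p + d * q) (f u) (f v) := by
  induction h with
  | refl u => exact refl (f u)
  | of_mem_left hr => simpa using hR _ hr
  | of_mem_right hs => simpa using hS _ hs
  | symm _ ih => exact ih.symm
  | trans _ _ ih ih' => exact (ih.trans ih').mono (by lia) (by lia)
  | mul _ _ ih ih' => rw [map_mul, map_mul]; exact (ih.mul ih').mono (by lia) (by lia)
  | mono _ hp hq ih => exact ih.mono (by gcongr) (by gcongr)

variable {π : G →* Q} (hπ : π.ker = Subgroup.normalClosure (R ∪ S))
include hπ

theorem map_eq (h : FillDistLE R S p q u v) : π u = π v := by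
  have map_relator : ∀ r ∈ R ∪ S, π r = 1 := fun r hr =>
    MonoidHom.mem_ker.1 (hπ ▸ Subgroup.subset_normalClosure hr)
  induction h with
  | refl => rfl
  | of_mem_left hr => rw [map_relator _ (.inl hr), map_one]
  | of_mem_right hs => rw [map_relator _ (.inr hs), map_one]
  | symm _ ih => exact ih.symm
  | trans _ _ ih ih' => exact ih.trans ih'
  | mul _ _ ih ih' => rw [map_mul, map_mul, ih, ih']
  | mono _ _ _ ih => exact ih

theorem exists_of_map_eq (h : π u = π v) : ∃ n, FillDistLE R S n n u v := by
  suffices ∀ w ∈ Subgroup.normalClosure (R ∪ S), ∃ n, FillDistLE R S n n w 1 by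
    obtain ⟨n, hn⟩ := this (u * v⁻¹) (hπ ▸ (by simp [MonoidHom.mem_ker, h]))
    exact ⟨n, by simpa using hn.mul_right v⟩
  intro w hw
  induction hw using Subgroup.closure_induction with
  | mem w hw =>
    obtain ⟨r, hr, hrw⟩ := Group.mem_conjugatesOfSet_iff.1 hw
    obtain ⟨x, rfl⟩ := isConj_iff.1 hrw
    have hr1 : FillDistLE R S 1 1 r 1 :=
      hr.elim (fun h => (of_mem_left h).mono le_rfl zero_le_one)
        fun h => (of_mem_right h).mono zero_le_one le_rfl
    exact ⟨1, by simpa using (hr1.mul_left x).mul_right x⁻¹⟩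
  | one => exact ⟨0, refl 1⟩
  | mul w w' _ _ ih ih' =>
    obtain ⟨n, hn⟩ := ih
    obtain ⟨n', hn'⟩ := ih'
    exact ⟨n + n', by simpa using hn.mul hn'⟩
  | inv w _ ih =>
    obtain ⟨n, hn⟩ := ih
    exact ⟨n, by simpa using (hn.mul_left w⁻¹).symm⟩

theorem exists_forall_of_map_eq {ι : Type*} [Finite ι] {f g : ι → G}
    (h : ∀ i, π (f i) = π (g i)) : ∃ K, ∀ i, FillDistLE R S K K (f i) (g i) := by
  choose n hn using fun i => exists_of_map_eq hπ (h i)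
  obtain ⟨K, hK⟩ := Finite.exists_le n
  exact ⟨K, fun i => (hn i).mono (hK i) (hK i)⟩

end FillDistLE

/-! ### Separating two commuting letters -/

/-- The letters of a word in elements `g i`, called the base letters, and two further elements, the
left and the right letter. -/
inductive SplitLetter (ι : Type*)
  | base (i : ι)
  | left
  | right

namespace SplitLetter

variable {ι G : Type*} [Group G]

/-- The value of a letter when the base letters are `g i`, the left letter is `x` and the right
letter is `y`. -/
def eval (g : ι → G) (x y : G) : SplitLetter ι → G
  | base i => g i
  | left => x
  | right => y

/-- The value of a word when the base letters are `g i`, the left letter is `x` and the right letter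
is `y`. -/
def evalWord (g : ι → G) (x y : G) (t : List (SplitLetter ι)) : G :=
  (t.map (eval g x y)).prod

theorem evalWord_cons (g : ι → G) (x y : G) (a : SplitLetter ι) (t : List (SplitLetter ι)) :
    evalWord g x y (a :: t) = eval g x y a * evalWord g x y t := by
  rw [evalWord, List.map_cons, List.prod_cons, evalWord]

end SplitLetter

/-- The data of a product of an element of `Δ`, of conjugates of the right letter by elements of `Δ`
and of conjugates of the left letter by elements of `Δ`. -/
structure SplitForm (Δ : Type*) where
  head : Δ
  rights : List Δ
  lefts : List Δ

namespace SplitForm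

/-- The value of a form when `s` lifts the elements of `Δ`, the left letter is `x` and the right
letter is `y`. -/
def eval {Δ G : Type*} [Group G] (s : Δ → G) (x y : G) (f : SplitForm Δ) : G :=
  s f.head * (f.rights.map fun δ => (s δ)⁻¹ * y * s δ).prod *
    (f.lefts.map fun δ => (s δ)⁻¹ * x * s δ).prod

theorem eval_eq_mul {Δ G : Type*} [Group G] (s : Δ → G) (x y : G) (f : SplitForm Δ) :
    f.eval s x y = f.eval s 1 y * (s f.head)⁻¹ * f.eval s x 1 := by
  simp [eval, mul_assoc]

/-- The form of a letter followed by a word of form `f`, where the base letters have the values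
`γ i` in `Δ`. -/
def cons {ι Δ : Type*} [Group Δ] (γ : ι → Δ) (f : SplitForm Δ) : SplitLetter ι → SplitForm Δ
  | .base i => { f with head := γ i * f.head }
  | .left => { f with lefts := f.head :: f.lefts }
  | .right => { f with rights := f.head :: f.rights }

/-- The form obtained from a word by moving all base letters to the front and then all conjugates of
the right letter before those of the left letter. -/
def ofWord {ι Δ : Type*} [Group Δ] (γ : ι → Δ) : List (SplitLetter ι) → SplitForm Δ
  | [] => ⟨1, [], []⟩
  | a :: t => (ofWord γ t).cons γ a

theorem length_rights_ofWord_le {ι Δ : Type*} [Group Δ] (γ : ι → Δ) (t : List (SplitLetter ι)) :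
    (ofWord γ t).rights.length ≤ t.length := by
  induction t with
  | nil => rfl
  | cons a t ih => cases a <;> simp only [ofWord, cons, List.length_cons] <;> lia

end SplitForm

theorem FillDistLE.mul_list_prod_comm {G ι : Type*} [Group G] {R S : Set G} {K : ℕ} {z : G}
    {f : ι → G} (h : ∀ i, FillDistLE R S K K (z * f i) (f i * z)) :
    ∀ l : List ι, FillDistLE R S (K * l.length) (K * l.length) (z * (l.map f).prod)
      ((l.map f).prod * z)
  | [] => of_eq (by simp)
  | i :: l => by
    have hi := ((h i).mul_right (l.map f).prod).trans <|
      (of_eq (mul_assoc _ _ _)).trans ((mul_list_prod_comm h l).mul_left (f i))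
    simp only [List.map_cons, List.prod_cons, ← mul_assoc] at hi ⊢
    exact hi.mono (by simp; lia) (by simp; lia)

namespace SplitForm

variable {ι Δ G Q : Type*} [Group Δ] [Group G] [Group Q] {R S : Set G}
  {π : G →* Q} (hπ : π.ker = Subgroup.normalClosure (R ∪ S)) {φ : Δ →* Q} {s : Δ → G}
  (hs : ∀ δ, π (s δ) = φ δ) {g : ι → G} {γ : ι → Δ} (hγ : ∀ i, φ (γ i) = π (g i)) {x y : G}

include hs in
theorem commute_conj_conj (hxy : ∀ δ, Commute (π x) ((φ δ)⁻¹ * π y * φ δ)) (δ ε : Δ) :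
    Commute (π ((s δ)⁻¹ * x * s δ)) (π ((s ε)⁻¹ * y * s ε)) := by
  have h := (Commute.conj_iff (φ δ)⁻¹).2 (hxy (ε * δ⁻¹))
  simpa [hs, mul_assoc] using h

variable [Finite Δ]

include hπ hs in
theorem exists_fillDistLE_left_mul_eval (hxy : ∀ δ, Commute (π x) ((φ δ)⁻¹ * π y * φ δ)) :
    ∃ K, ∀ f : SplitForm Δ, FillDistLE R S (K * f.rights.length) (K * f.rights.length)
      (x * f.eval s x y) ({ f with lefts := f.head :: f.lefts }.eval s x y) := by
  obtain ⟨K, hK⟩ := FillDistLE.exists_forall_of_map_eq hπ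
    (f := fun δε : Δ × Δ => (s δε.1)⁻¹ * x * s δε.1 * ((s δε.2)⁻¹ * y * s δε.2))
    (g := fun δε => (s δε.2)⁻¹ * y * s δε.2 * ((s δε.1)⁻¹ * x * s δε.1))
    fun δε => by simpa only [map_mul] using (commute_conj_conj hs hxy δε.1 δε.2).eq
  refine ⟨K, fun f => ?_⟩
  have swap := FillDistLE.mul_list_prod_comm (z := (s f.head)⁻¹ * x * s f.head)
    (f := fun ε => (s ε)⁻¹ * y * s ε) (fun ε => hK (f.head, ε)) f.rights
  have h := (swap.mul_left (s f.head)).mul_right (f.lefts.map fun δ => (s δ)⁻¹ * x * s δ).prod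
  simpa only [eval, List.map_cons, List.prod_cons, mul_assoc, mul_inv_cancel_left] using h

variable [Finite ι]
include hπ hs hγ

theorem exists_fillDistLE_eval_cons (hxy : ∀ δ, Commute (π x) ((φ δ)⁻¹ * π y * φ δ)) :
    ∃ K, ∀ (a : SplitLetter ι) (f : SplitForm Δ),
      FillDistLE R S (K * (f.rights.length + 1)) (K * (f.rights.length + 1))
        (a.eval g x y * f.eval s x y) ((f.cons γ a).eval s x y) := by
  obtain ⟨k, base_mul⟩ := FillDistLE.exists_forall_of_map_eq hπ
    (f := fun iδ : ι × Δ => g iδ.1 * s iδ.2) (g := fun iδ => s (γ iδ.1 * iδ.2)) (by simp [hs, hγ])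
  obtain ⟨k', left_mul⟩ := exists_fillDistLE_left_mul_eval hπ hs hxy
  refine ⟨k + k', fun a f => ?_⟩
  cases a with
  | base i =>
    have h := (base_mul (i, f.head)).mul_right ((f.rights.map fun δ => (s δ)⁻¹ * y * s δ).prod *
      (f.lefts.map fun δ => (s δ)⁻¹ * x * s δ).prod)
    simp only [SplitLetter.eval, cons, eval, mul_assoc] at h ⊢
    exact h.mono (by lia) (by lia)
  | left => exact (left_mul f).mono (by lia) (by lia)
  | right =>
    refine (FillDistLE.of_eq ?_).mono (Nat.zero_le _) (Nat.zero_le _)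
    simp [SplitLetter.eval, cons, eval, mul_assoc]

theorem exists_fillDistLE_eval_ofWord (hxy : ∀ δ, Commute (π x) ((φ δ)⁻¹ * π y * φ δ)) :
    ∃ K, ∀ t : List (SplitLetter ι),
      FillDistLE R S (K * (t.length + 1) ^ 2) (K * (t.length + 1) ^ 2)
        (SplitLetter.evalWord g x y t) ((ofWord γ t).eval s x y) := by
  obtain ⟨k, one_dist⟩ := FillDistLE.exists_of_map_eq hπ (u := 1) (v := s 1) (by simp [hs])
  obtain ⟨k', cons_dist⟩ := exists_fillDistLE_eval_cons hπ hs hγ hxy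
  refine ⟨k + k', fun t => ?_⟩
  induction t with
  | nil =>
    have h : FillDistLE R S k k (SplitLetter.evalWord g x y []) ((ofWord γ []).eval s x y) := by
      simpa [SplitLetter.evalWord, ofWord, eval] using one_dist
    exact h.mono (by simp) (by simp)
  | cons a t ih =>
    rw [SplitLetter.evalWord_cons]
    have hle : (k + k') * (t.length + 1) ^ 2 + k' * ((ofWord γ t).rights.length + 1) ≤
        (k + k') * ((a :: t).length + 1) ^ 2 := by
      have := length_rights_ofWord_le γ t
      rw [List.length_cons]
      nlinarith
    exact ((ih.mul_left _).trans (cons_dist a (ofWord γ t))).mono hle hle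

-- In the form `δ Y X` of the word, erasing the left letter leaves `δ Y`, erasing the right letter
-- leaves `δ X`, and `δ` itself takes only finitely many values.
theorem exists_fillDistLE_evalWord_one (hxy : ∀ δ, Commute (π x) ((φ δ)⁻¹ * π y * φ δ)) :
    ∃ K, ∀ (t : List (SplitLetter ι)) (p q p' q' : ℕ),
      π (SplitLetter.evalWord g x y t) = 1 →
      FillDistLE R S p q (SplitLetter.evalWord g 1 y t) 1 →
      FillDistLE R S p' q' (SplitLetter.evalWord g x 1 t) 1 →
      FillDistLE R S (p + p' + K * (t.length + 1) ^ 2) (q + q' + K * (t.length + 1) ^ 2)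
        (SplitLetter.evalWord g x y t) 1 := by
  obtain ⟨k₁, form_both⟩ := exists_fillDistLE_eval_ofWord hπ hs hγ hxy
  obtain ⟨k₂, form_right⟩ := exists_fillDistLE_eval_ofWord (x := 1) (y := y) hπ hs hγ (by simp)
  obtain ⟨k₃, form_left⟩ := exists_fillDistLE_eval_ofWord (x := x) (y := 1) hπ hs hγ (by simp)
  obtain ⟨k₄, head_dist⟩ := FillDistLE.exists_forall_of_map_eq hπ
    (f := fun δ : {δ // π (s δ)⁻¹ = 1} => (s δ)⁻¹) (g := fun _ => 1)
    fun δ => by rw [δ.2, map_one]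
  refine ⟨k₁ + k₂ + k₃ + k₄, fun t p q p' q' ht hright hleft => ?_⟩
  have both := form_both t
  have right_dist := (form_right t).symm.trans hright
  have left_dist := (form_left t).symm.trans hleft
  have hhead : π (s (ofWord γ t).head)⁻¹ = 1 := by
    have h := (both.map_eq hπ).symm.trans ht
    rwa [eval_eq_mul, map_mul, map_mul, right_dist.map_eq hπ, left_dist.map_eq hπ, map_one,
      one_mul, mul_one] at h
  rw [eval_eq_mul] at both
  have h := both.trans ((right_dist.mul (head_dist ⟨_, hhead⟩)).mul left_dist)
  rw [mul_one, mul_one] at h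
  have hk₄ : k₄ ≤ k₄ * (t.length + 1) ^ 2 := Nat.le_mul_of_pos_right _ (by positivity)
  exact h.mono (by linarith) (by linarith)

end SplitForm

/-! ### Homomorphisms from dihedral groups -/

section DihedralLift

variable {G : Type*} [Group G] {n : ℕ} {x y z : G}

theorem commute_of_mul_pow_two_eq_one (hx : x * x = 1) (hy : y * y = 1)
    (hxy : (x * y) ^ 2 = 1) : Commute x y := by
  have h := inv_eq_of_mul_eq_one_left (pow_two (x * y) ▸ hxy)
  rw [mul_inv_rev, inv_eq_of_mul_eq_one_left hx, inv_eq_of_mul_eq_one_left hy] at h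
  exact h.symm

/-- The map `i ↦ z ^ i` on residues modulo an exponent `n` of `z`. -/
def zmodPow (hz : z ^ n = 1) (i : ZMod n) : G :=
  (ZMod.lift n ⟨zmultiplesHom (Additive G) (.ofMul z), by simp [← ofMul_pow, hz]⟩ i).toMul

theorem zmodPow_intCast (hz : z ^ n = 1) (i : ℤ) : zmodPow hz i = z ^ i := by
  simp [zmodPow]

theorem mul_zpow_mul_of_mul_self_eq_one (hx : x * x = 1) (hy : y * y = 1) (i : ℤ) :
    x * (x * y) ^ i * x = (x * y) ^ (-i) := by
  have hx' : x⁻¹ = x := inv_eq_of_mul_eq_one_left hx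
  have hy' : y⁻¹ = y := inv_eq_of_mul_eq_one_left hy
  nth_rw 3 [← hx']
  rw [← conj_zpow, zpow_neg, ← inv_zpow, mul_inv_rev, hx', hy', ← mul_assoc, hx, one_mul]

/-- The homomorphism from the dihedral group of order `2 * n` determined by two involutions `x`, `y`
whose product has order dividing `n`; it sends the reflections `sr 0` and `sr 1` to `x` and `y`. -/
def dihedralLift (hx : x * x = 1) (hy : y * y = 1) (hxy : (x * y) ^ n = 1) :
    DihedralGroup n →* G where
  toFun
    | .r i => zmodPow hxy i
    | .sr i => x * zmodPow hxy i
  map_one' := by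
    rw [DihedralGroup.one_def]
    simpa using zmodPow_intCast hxy 0
  map_mul' := by
    have swap (i : ℤ) : (x * y) ^ i * x = x * (x * y) ^ (-i) := by
      rw [← mul_zpow_mul_of_mul_self_eq_one hx hy, ← mul_assoc, ← mul_assoc, hx, one_mul]
    rintro (i | i) (j | j) <;>
      obtain ⟨i, rfl⟩ := ZMod.intCast_surjective i <;>
      obtain ⟨j, rfl⟩ := ZMod.intCast_surjective j <;>
      simp only [DihedralGroup.r_mul_r, DihedralGroup.r_mul_sr, DihedralGroup.sr_mul_r,
        DihedralGroup.sr_mul_sr, ← Int.cast_add, ← Int.cast_sub, zmodPow_intCast]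
    · exact zpow_add _ i j
    · rw [← mul_assoc, swap, mul_assoc, ← zpow_add, neg_add_eq_sub]
    · rw [mul_assoc, ← zpow_add]
    · rw [mul_assoc, ← mul_assoc _ x, swap, mul_assoc, ← mul_assoc x x, hx, one_mul, ← zpow_add,
        neg_add_eq_sub]

variable (hx : x * x = 1) (hy : y * y = 1) (hxy : (x * y) ^ n = 1)

theorem dihedralLift_sr_zero : dihedralLift hx hy hxy (.sr 0) = x := by
  simpa [dihedralLift] using zmodPow_intCast hxy 0

theorem dihedralLift_sr_one : dihedralLift hx hy hxy (.sr 1) = y := by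
  have h : zmodPow hxy 1 = x * y := by simpa using zmodPow_intCast hxy 1
  simp [dihedralLift, h, ← mul_assoc, hx]

theorem dihedralLift_r_one : dihedralLift hx hy hxy (.r 1) = x * y := by
  rw [show (.r 1 : DihedralGroup n) = .sr 0 * .sr 1 by simp, map_mul, dihedralLift_sr_zero,
    dihedralLift_sr_one]

theorem exists_eq_sr_one_pow_mul_r_one_pow_mul_sr_zero_pow (δ : DihedralGroup 4) :
    ∃ i j k : Fin 2, δ = .sr 1 ^ i.val * .r 1 ^ j.val * .sr 0 ^ k.val := by
  decide +revert

-- Only the double coset of `δ` modulo `⟨y⟩` on the left and `⟨x⟩` on the right matters, and there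
-- are two of them in the dihedral group of order 8.
theorem commute_conj_dihedralLift {u v : G} (hxy : (x * y) ^ 4 = 1) (hu : Commute u x)
    (hv : Commute v y) (huv : Commute u v) (huv' : Commute u ((x * y)⁻¹ * v * (x * y)))
    (δ : DihedralGroup 4) :
    Commute u ((dihedralLift hx hy hxy δ)⁻¹ * v * dihedralLift hx hy hxy δ) := by
  obtain ⟨i, j, k, rfl⟩ := exists_eq_sr_one_pow_mul_r_one_pow_mul_sr_zero_pow δ
  have hconj : Commute u (((x * y) ^ j.val)⁻¹ * v * (x * y) ^ j.val) := by
    fin_cases j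
    · simpa using huv
    · simpa using huv'
  have hv' : (y ^ i.val)⁻¹ * v * y ^ i.val = v := by
    rw [mul_assoc, (hv.pow_right i).eq, inv_mul_cancel_left]
  have hk : Commute u (x ^ k.val) := hu.pow_right k
  simp only [map_mul, map_pow, dihedralLift_sr_zero, dihedralLift_sr_one, dihedralLift_r_one]
  rw [← hv'] at hconj
  simpa only [mul_inv_rev, mul_assoc] using (hk.inv_right.mul_right hconj).mul_right hk

end DihedralLift

namespace Grigorchuk

/-! ### The Grigorchuk group -/

@[simp] theorem of_a : FreeGroup.of L4.a = ga := rfl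

@[simp] theorem of_b : FreeGroup.of L4.b = gb := rfl

@[simp] theorem of_c : FreeGroup.of L4.c = gc := rfl

@[simp] theorem of_d : FreeGroup.of L4.d = gd := rfl

theorem hom_ext {G : Type*} [Group G] {f g : F4 →* G} (ha : f ga = g ga) (hb : f gb = g gb)
    (hc : f gc = g gc) (hd : f gd = g gd) : f = g :=
  FreeGroup.ext_hom _ _ fun
    | .a => ha
    | .b => hb
    | .c => hc
    | .d => hd

/-- The Grigorchuk group, given by the Lysenok presentation. -/
abbrev Γ : Type := PresentedGroup Rinf

/-- The evaluation of words in the Grigorchuk group. -/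
def proj : F4 →* Γ := PresentedGroup.mk Rinf

/-- The generator `a` of the Grigorchuk group. -/
def A : Γ := proj ga

/-- The generator `b` of the Grigorchuk group. -/
def B : Γ := proj gb

/-- The generator `c` of the Grigorchuk group. -/
def C : Γ := proj gc

/-- The generator `d` of the Grigorchuk group. -/
def D : Γ := proj gd

@[simp] theorem proj_ga : proj ga = A := rfl

@[simp] theorem proj_gb : proj gb = B := rfl

@[simp] theorem proj_gc : proj gc = C := rfl

@[simp] theorem proj_gd : proj gd = D := rfl

@[simp] theorem sigma_ga : sigma ga = ga * gc * ga := FreeGroup.lift_apply_of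

@[simp] theorem sigma_gb : sigma gb = gd := FreeGroup.lift_apply_of

@[simp] theorem sigma_gc : sigma gc = gb := FreeGroup.lift_apply_of

@[simp] theorem sigma_gd : sigma gd = gc := FreeGroup.lift_apply_of

theorem proj_eq_one_of_mem {r : F4} (hr : r ∈ Rinf) : proj r = 1 :=
  PresentedGroup.one_of_mem hr

@[simp] theorem A_mul_A : A * A = 1 := by
  have h : ga ^ 2 ∈ Rinf := by simp [Rinf]
  simpa [pow_two] using proj_eq_one_of_mem h

@[simp] theorem C_mul_C : C * C = 1 := by
  have h : gc ^ 2 ∈ Rinf := by simp [Rinf]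
  simpa [pow_two] using proj_eq_one_of_mem h

@[simp] theorem D_mul_D : D * D = 1 := by
  have h : gd ^ 2 ∈ Rinf := by simp [Rinf]
  simpa [pow_two] using proj_eq_one_of_mem h

@[simp] theorem A_mul_A_mul (x : Γ) : A * (A * x) = x := by rw [← mul_assoc, A_mul_A, one_mul]

@[simp] theorem C_mul_C_mul (x : Γ) : C * (C * x) = x := by rw [← mul_assoc, C_mul_C, one_mul]

@[simp] theorem D_mul_D_mul (x : Γ) : D * (D * x) = x := by rw [← mul_assoc, D_mul_D, one_mul]

@[simp] theorem inv_A : A⁻¹ = A := inv_eq_of_mul_eq_one_left A_mul_A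

@[simp] theorem inv_C : C⁻¹ = C := inv_eq_of_mul_eq_one_left C_mul_C

@[simp] theorem inv_D : D⁻¹ = D := inv_eq_of_mul_eq_one_left D_mul_D

@[simp] theorem B_eq : B = C * D := by
  have hB : gb ^ 2 ∈ Rinf := by simp [Rinf]
  have hBCD : gb * gc * gd ∈ Rinf := by simp [Rinf]
  have hBB : B * B = 1 := by simpa [pow_two] using proj_eq_one_of_mem hB
  have hB_CD : B * (C * D) = 1 := by simpa [mul_assoc] using proj_eq_one_of_mem hBCD
  exact left_inv_eq_right_inv hBB hB_CD

@[simp] theorem D_mul_C : D * C = C * D := by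
  have h : gb * gc * gd ∈ Rinf := by simp [Rinf]
  have hCDCD : C * D * (C * D) = 1 := by simpa [mul_assoc] using proj_eq_one_of_mem h
  simpa using inv_eq_of_mul_eq_one_left hCDCD

@[simp] theorem D_mul_C_mul (x : Γ) : D * (C * x) = C * (D * x) := by
  rw [← mul_assoc, D_mul_C, mul_assoc]

/-- The generator `c` conjugated by `a`. -/
def C' : Γ := A * C * A

/-- The generator `d` conjugated by `a`. -/
def D' : Γ := A * D * A

theorem C'_mul_C' : C' * C' = 1 := by simp [C', mul_assoc]

theorem A_mul_D_pow_four : (A * D) ^ 4 = 1 := by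
  have h : (ga * gd) ^ 4 ∈ Rinf := .inl (.inr ⟨0, rfl⟩)
  simpa using proj_eq_one_of_mem h

theorem C_mul_C'_pow_four : (C * C') ^ 4 = 1 := by
  have h : sigma ((ga * gd) ^ 4) ∈ Rinf := .inl (.inr ⟨1, rfl⟩)
  have h' : (C' * C) ^ 4 = 1 := by simpa [C'] using proj_eq_one_of_mem h
  rw [show C * C' = C * (C' * C) * C⁻¹ by group, conj_pow, h']
  simp

theorem commute_D_D' : Commute D D' := by
  refine commute_of_mul_pow_two_eq_one D_mul_D (by simp [D', mul_assoc]) ?_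
  rw [show D * D' = A * (A * D) ^ 2 * A⁻¹ by simp [D', pow_two, mul_assoc], conj_pow, ← pow_mul,
    A_mul_D_pow_four]
  simp

theorem commute_D_conj_D' : Commute D ((C * C')⁻¹ * D' * (C * C')) := by
  have h : (ga * gd * ga * gc * ga * gc) ^ 4 ∈ Rinf := .inr ⟨0, rfl⟩
  have h' : (A * D * A * C * A * C) ^ 4 = 1 := by simpa using proj_eq_one_of_mem h
  refine commute_of_mul_pow_two_eq_one D_mul_D (by simp [C', D', mul_assoc]) ?_
  rw [show D * ((C * C')⁻¹ * D' * (C * C')) = A * (A * D * A * C * A * C) ^ 2 * A⁻¹ by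
    simp [C', D', pow_two, mul_assoc], conj_pow, ← pow_mul, h']
  simp

theorem commute_D_conj_dihedralLift_D' (δ : DihedralGroup 4) :
    Commute D ((dihedralLift C_mul_C C'_mul_C' C_mul_C'_pow_four δ)⁻¹ * D' *
      dihedralLift C_mul_C C'_mul_C' C_mul_C'_pow_four δ) :=
  commute_conj_dihedralLift C_mul_C C'_mul_C' C_mul_C'_pow_four D_mul_C
    (by simp [Commute, SemiconjBy, C', D', mul_assoc]) commute_D_D' commute_D_conj_D' δ

/-! ### The cost of rewriting words -/

/-- The relators of the Lysenok presentation other than `a²`. -/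
def otherRelators : Set F4 :=
  {gb ^ 2, gc ^ 2, gd ^ 2, gb * gc * gd}
    ∪ {w | ∃ i : ℕ, w = sigma^[i] ((ga * gd) ^ 4)}
    ∪ {w | ∃ i : ℕ, w = sigma^[i] ((ga * gd * ga * gc * ga * gc) ^ 4)}

theorem singleton_union_otherRelators : {ga ^ 2} ∪ otherRelators = Rinf := by
  simp only [otherRelators, Rinf, Set.singleton_union, Set.insert_union]

/-- `WordDistLE n u v` says that `u` can be transformed into `v` by at most `n` applications of the
relator `a²` and at most `n` applications of the other relators. -/
abbrev WordDistLE (n : ℕ) (u v : F4) : Prop :=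
  FillDistLE {ga ^ 2} otherRelators n n u v

theorem ker_proj : proj.ker = Subgroup.normalClosure ({ga ^ 2} ∪ otherRelators) := by
  rw [singleton_union_otherRelators]
  exact QuotientGroup.ker_mk' _

theorem fillDistLE_sigma_sq_ga : FillDistLE {ga ^ 2} otherRelators 2 1 (sigma (ga ^ 2)) 1 := by
  have hga : FillDistLE {ga ^ 2} otherRelators 1 0 (ga * ga) 1 :=
    pow_two ga ▸ .of_mem_left rfl
  have hgc : FillDistLE {ga ^ 2} otherRelators 0 1 (gc * gc) 1 :=
    pow_two gc ▸ .of_mem_right (by simp [otherRelators])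
  have h := ((((hga.mul_left (ga * gc)).mul_right (gc * ga)).trans
    (.of_eq (by group))).trans ((hgc.mul_left ga).mul_right ga)).trans
      ((FillDistLE.of_eq (by group)).trans hga)
  convert h using 1
  simp [pow_two, mul_assoc]

theorem fillDistLE_sigma_of_mem_otherRelators {s : F4} (hs : s ∈ otherRelators) :
    FillDistLE {ga ^ 2} otherRelators 0 1 (sigma s) 1 := by
  rcases hs with ((rfl | rfl | rfl | rfl) | ⟨i, rfl⟩) | ⟨i, rfl⟩
  · exact .of_mem_right (by simp [otherRelators])
  · exact .of_mem_right (by simp [otherRelators])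
  · exact .of_mem_right (by simp [otherRelators])
  · have h : FillDistLE {ga ^ 2} otherRelators 0 1 (gb * gc * gd) 1 :=
      .of_mem_right (by simp [otherRelators])
    simpa [mul_assoc] using (h.mul_left gd).mul_right gd⁻¹
  · exact .of_mem_right (.inl (.inr ⟨i + 1, (Function.iterate_succ_apply' _ _ _).symm⟩))
  · exact .of_mem_right (.inr ⟨i + 1, (Function.iterate_succ_apply' _ _ _).symm⟩)

-- The substitution turns the relator `a²` into `acaaca`, that is two `a²` and one `c²`, and any
-- other relator into a single one. Counting the two kinds separately, the cost merely doubles.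
theorem WordDistLE.map_sigma {n : ℕ} {u v : F4} (h : WordDistLE n u v) :
    WordDistLE (2 * n) (sigma u) (sigma v) :=
  (FillDistLE.map sigma (by rintro _ rfl; exact fillDistLE_sigma_sq_ga)
    (fun _ => fillDistLE_sigma_of_mem_otherRelators) h).mono (by lia) (by lia)

theorem WordDistLE.exists_isProdConjPM {n : ℕ} {u v : F4} (h : WordDistLE n u v) :
    ∃ L ≤ 2 * n, IsProdConjPM Rinf L (u * v⁻¹) := by
  rw [two_mul, ← singleton_union_otherRelators]
  exact FillDistLE.exists_isProdConjPM h

/-! ### The wreath recursion -/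

section Wreath

variable {Q : Type*} [Group Q]

/-- The inclusion of the base group `Q × Q` of the wreath product of `Q` by the group of order 2,
the first factor being indexed by `1` and the second by `-1`. -/
def diag : Q × Q →* Q ≀ᵣ ℤˣ where
  toFun x := ⟨fun ε => if ε = 1 then x.1 else x.2, 1⟩
  map_one' := by ext <;> simp
  map_mul' x y := by
    ext ε
    · by_cases hε : ε = 1 <;> simp [hε]
    · simp

theorem diag_injective : Function.Injective (diag : Q × Q →* Q ≀ᵣ ℤˣ) := fun x y h => by
  have h' (ε : ℤˣ) : (diag x).left ε = (diag y).left ε := by rw [h]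
  exact Prod.ext (by simpa [diag] using h' 1) (by simpa [diag] using h' (-1))

/-- The element of order 2 exchanging the two factors of the base group. -/
def swap : Q ≀ᵣ ℤˣ := RegularWreathProduct.inl (-1)

@[simp] theorem swap_mul_swap : (swap : Q ≀ᵣ ℤˣ) * swap = 1 := by
  rw [swap, ← map_mul]
  simp

@[simp] theorem swap_mul_swap_mul (z : Q ≀ᵣ ℤˣ) : swap * (swap * z) = z := by
  rw [← mul_assoc, swap_mul_swap, one_mul]

@[simp] theorem diag_mul_swap (x y : Q) : diag (x, y) * swap = swap * diag (y, x) := by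
  ext ε
  · obtain rfl | rfl := Int.units_eq_one_or ε <;> simp [diag, swap]
  · simp [diag, swap]

@[simp] theorem diag_mul_swap_mul (x y : Q) (z : Q ≀ᵣ ℤˣ) :
    diag (x, y) * (swap * z) = swap * (diag (y, x) * z) := by
  rw [← mul_assoc, diag_mul_swap, mul_assoc]

@[simp] theorem diag_one_one : diag ((1, 1) : Q × Q) = 1 :=
  map_one diag

@[simp] theorem diag_mul_diag (x y x' y' : Q) :
    diag (x, y) * diag (x', y') = diag (x * x', y * y') :=
  (map_mul diag (x, y) (x', y')).symm

end Wreath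

/-- The map from words to the wreath product of the Grigorchuk group by the group of order 2 that
describes the action of the Grigorchuk group on the two halves of the binary tree. -/
def freeWreathRecursion : F4 →* Γ ≀ᵣ ℤˣ :=
  FreeGroup.lift fun
    | .a => swap
    | .b => diag (A, C)
    | .c => diag (A, D)
    | .d => diag (1, B)

@[simp] theorem freeWreathRecursion_ga : freeWreathRecursion ga = swap :=
  FreeGroup.lift_apply_of

@[simp] theorem freeWreathRecursion_gb : freeWreathRecursion gb = diag (A, C) :=
  FreeGroup.lift_apply_of

@[simp] theorem freeWreathRecursion_gc : freeWreathRecursion gc = diag (A, D) :=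
  FreeGroup.lift_apply_of

@[simp] theorem freeWreathRecursion_gd : freeWreathRecursion gd = diag (1, B) :=
  FreeGroup.lift_apply_of

theorem D_mul_A_pow_four : (D * A) ^ 4 = 1 := by
  rw [show D * A = A * (A * D) * A⁻¹ by simp, conj_pow, A_mul_D_pow_four]
  simp

/-- The first component of the wreath recursion on the image of the substitution `sigma`. It factors
through the dihedral group of order 8 that maps onto the subgroup generated by `d` and `a`. -/
def sigmaFst : F4 →* DihedralGroup 4 :=
  FreeGroup.lift fun
    | .a => .sr 0
    | .b => 1
    | .c => .sr 1
    | .d => .sr 1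

@[simp] theorem sigmaFst_ga : sigmaFst ga = .sr 0 := FreeGroup.lift_apply_of

@[simp] theorem sigmaFst_gb : sigmaFst gb = 1 := FreeGroup.lift_apply_of

@[simp] theorem sigmaFst_gc : sigmaFst gc = .sr 1 := FreeGroup.lift_apply_of

@[simp] theorem sigmaFst_gd : sigmaFst gd = .sr 1 := FreeGroup.lift_apply_of

theorem freeWreathRecursion_sigma (w : F4) :
    freeWreathRecursion (sigma w) =
      diag (dihedralLift D_mul_D A_mul_A D_mul_A_pow_four (sigmaFst w), proj w) := by
  have h : freeWreathRecursion.comp sigma =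
      diag.comp (((dihedralLift D_mul_D A_mul_A D_mul_A_pow_four).comp sigmaFst).prod proj) := by
    refine hom_ext ?_ ?_ ?_ ?_ <;> simp [dihedralLift_sr_zero, dihedralLift_sr_one, mul_assoc]
  exact DFunLike.congr_fun h w

theorem freeWreathRecursion_sigma_iterate_pow_four {u : F4}
    (hu : freeWreathRecursion u ^ 4 = 1) (hmem : ∀ i, sigma^[i] (u ^ 4) ∈ Rinf) :
    ∀ i, freeWreathRecursion (sigma^[i] (u ^ 4)) = 1
  | 0 => by rwa [Function.iterate_zero_apply, map_pow]
  | i + 1 => by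
    have hfst (δ : DihedralGroup 4) : δ ^ 4 = 1 := by decide +revert
    rw [Function.iterate_succ_apply', freeWreathRecursion_sigma, proj_eq_one_of_mem (hmem i),
      iterate_map_pow, map_pow, hfst, map_one, diag_one_one]

theorem freeWreathRecursion_of_mem {r : F4} (hr : r ∈ Rinf) : freeWreathRecursion r = 1 := by
  have had : freeWreathRecursion (ga * gd) ^ 4 = 1 := by
    simp [pow_succ, mul_assoc]
  have hadacac : freeWreathRecursion (ga * gd * ga * gc * ga * gc) ^ 4 = 1 := by
    simp [pow_succ, mul_assoc]
  rcases hr with ((rfl | rfl | rfl | rfl | rfl) | ⟨i, rfl⟩) | ⟨i, rfl⟩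
  · simp [pow_two]
  · simp [pow_two]
  · simp [pow_two]
  · simp [pow_two, mul_assoc]
  · simp [mul_assoc]
  · exact freeWreathRecursion_sigma_iterate_pow_four had (fun i => .inl (.inr ⟨i, rfl⟩)) i
  · exact freeWreathRecursion_sigma_iterate_pow_four hadacac (fun i => .inr ⟨i, rfl⟩) i

theorem freeWreathRecursion_eq_one {w : F4} (hw : proj w = 1) : freeWreathRecursion w = 1 := by
  have hle : Subgroup.normalClosure Rinf ≤ freeWreathRecursion.ker :=
    Subgroup.normalClosure_le_normal fun _ => freeWreathRecursion_of_mem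
  exact hle (PresentedGroup.mk_eq_one_iff.1 hw)

/-! ### Alternating words -/

theorem prod_map_flatMap {α β M : Type*} [Monoid M] (f : α → List β) (g : β → M) (l : List α) :
    ((l.flatMap f).map g).prod = (l.map fun a => ((f a).map g).prod).prod := by
  rw [List.map_flatMap, List.flatMap_def, List.prod_flatten, List.map_map, Function.comp_def]

/-- The element of the free group represented by a word without inverse letters. -/
def word (w : List L4) : F4 := (w.map FreeGroup.of).prod

theorem word_cons (u : L4) (w : List L4) : word (u :: w) = .of u * word w := by
  rw [word, List.map_cons, List.prod_cons, word]

theorem word_flatMap {ι : Type*} (f : ι → List L4) (t : List ι) :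
    word (t.flatMap f) = (t.map fun i => word (f i)).prod :=
  prod_map_flatMap f FreeGroup.of t

theorem wordDistLE_inv_of (u : L4) : WordDistLE 1 (FreeGroup.of u)⁻¹ (.of u) := by
  have hsq : WordDistLE 1 (FreeGroup.of u ^ 2) 1 := by
    cases u
    case a => exact .mono (.of_mem_left rfl) le_rfl zero_le_one
    all_goals
      refine .mono (.of_mem_right ?_) zero_le_one le_rfl
      simp [otherRelators]
  have h := (hsq.mul_left (.of u)⁻¹).symm
  rwa [mul_one, pow_two (FreeGroup.of u), inv_mul_cancel_left] at h

theorem wordDistLE_word_map_fst_toWord (W : F4) :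
    WordDistLE W.norm W (word (W.toWord.map Prod.fst)) := by
  have hletter (x : L4 × Bool) :
      WordDistLE 1 (cond x.2 (FreeGroup.of x.1) (FreeGroup.of x.1)⁻¹) (.of x.1) := by
    rcases x with ⟨u, _ | _⟩
    · exact wordDistLE_inv_of u
    · exact (FillDistLE.refl _).mono zero_le_one zero_le_one
  have h := FillDistLE.list_prod hletter W.toWord
  rw [one_mul, ← FreeGroup.lift_mk, FreeGroup.mk_toWord, FreeGroup.lift_of_apply] at h
  simpa only [word, List.map_map, Function.comp_def, FreeGroup.norm] using h

/-- The word `cⁱdʲ` representing an element of the four-group `{1, b, c, d}`. -/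
def kleinWord (x : Fin 2 × Fin 2) : F4 := gc ^ x.1.val * gd ^ x.2.val

/-- The word `x a y₁ a y₂ ⋯` alternating between `a` and the four-group `{1, b, c, d}`. -/
def altWord (x : Fin 2 × Fin 2) (l : List (Fin 2 × Fin 2)) : F4 :=
  kleinWord x * (l.map fun y => ga * kleinWord y).prod

theorem altWord_cons (x y : Fin 2 × Fin 2) (l : List (Fin 2 × Fin 2)) :
    altWord x (y :: l) = kleinWord x * ga * altWord y l := by
  simp only [altWord, List.map_cons, List.prod_cons, mul_assoc]

theorem exists_proj_of_mul_kleinWord {u : L4} (hu : u ≠ .a) (x : Fin 2 × Fin 2) :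
    ∃ y, proj (.of u * kleinWord x) = proj (kleinWord y) := by
  obtain ⟨i, j⟩ := x
  cases u with
  | a => exact absurd rfl hu
  | b => exact ⟨(i + 1, j + 1), by fin_cases i, j <;> simp [kleinWord, mul_assoc]⟩
  | c => exact ⟨(i + 1, j), by fin_cases i, j <;> simp [kleinWord]⟩
  | d => exact ⟨(i, j + 1), by fin_cases i, j <;> simp [kleinWord]⟩

instance : Finite L4 :=
  @Fintype.finite _ ⟨{.a, .b, .c, .d}, fun u => by cases u <;> simp⟩

theorem exists_wordDistLE_of_mul_kleinWord :
    ∃ K, ∀ (u : L4) (x : Fin 2 × Fin 2), u ≠ .a →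
      ∃ y, WordDistLE K (.of u * kleinWord x) (kleinWord y) := by
  choose f hf using fun ux : {u : L4 // u ≠ .a} × (Fin 2 × Fin 2) =>
    exists_proj_of_mul_kleinWord ux.1.2 ux.2
  obtain ⟨K, hK⟩ := FillDistLE.exists_forall_of_map_eq ker_proj hf
  exact ⟨K, fun u x hu => ⟨f (⟨u, hu⟩, x), hK (⟨u, hu⟩, x)⟩⟩

theorem exists_wordDistLE_word_altWord :
    ∃ K, ∀ w : List L4, ∃ x l, l.length = w.count .a ∧
      WordDistLE (K * w.length) (word w) (altWord x l) := by
  obtain ⟨K, hK⟩ := exists_wordDistLE_of_mul_kleinWord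
  refine ⟨K, fun w => ?_⟩
  induction w with
  | nil => exact ⟨0, [], rfl, .of_eq (by simp [word, altWord, kleinWord])⟩
  | cons u w ih =>
    obtain ⟨x, l, hl, hdist⟩ := ih
    rw [word_cons]
    by_cases hu : u = .a
    · refine ⟨0, x :: l, by simp [hl, hu], ?_⟩
      have h0 : altWord 0 (x :: l) = .of u * altWord x l := by
        simp [altWord_cons, kleinWord, hu]
      rw [h0]
      exact (hdist.mul_left (.of u)).mono (by simp; lia) (by simp; lia)
    · obtain ⟨y, hy⟩ := hK u x hu
      refine ⟨y, l, by simp [hl, hu], ?_⟩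
      have h := (hdist.mul_left (.of u)).trans <|
        (FillDistLE.of_eq (mul_assoc _ _ _).symm).trans (hy.mul_right _)
      exact h.mono (by simp; lia) (by simp; lia)

theorem right_freeWreathRecursion_altWord (x : Fin 2 × Fin 2) (l : List (Fin 2 × Fin 2)) :
    (freeWreathRecursion (altWord x l)).right = (-1) ^ l.length := by
  have hklein (y) : (freeWreathRecursion (kleinWord y)).right = 1 := by
    fin_cases y <;> simp [kleinWord, diag]
  induction l generalizing x with
  | nil => simp [altWord, hklein]
  | cons y l ih => simp [altWord_cons, ih, hklein, swap, pow_succ]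

theorem even_length_of_proj_altWord {x : Fin 2 × Fin 2} {l : List (Fin 2 × Fin 2)}
    (h : proj (altWord x l) = 1) : Even l.length := by
  have hright := right_freeWreathRecursion_altWord x l
  rw [freeWreathRecursion_eq_one h, RegularWreathProduct.one_right] at hright
  exact (neg_one_pow_eq_one_iff_even (by decide)).1 hright.symm

/-- The word `x a y a`, for `x` and `y` in the four-group `{1, b, c, d}`. -/
def pairWord (xy : (Fin 2 × Fin 2) × (Fin 2 × Fin 2)) : F4 :=
  kleinWord xy.1 * (ga * kleinWord xy.2 * ga)

/-- The word `x₁ a y₁ a x₂ a y₂ a ⋯`, representing an element of the stabilizer of the first level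
of the binary tree. -/
def pairsWord (h : List ((Fin 2 × Fin 2) × (Fin 2 × Fin 2))) : F4 := (h.map pairWord).prod

theorem exists_wordDistLE_altWord_pairsWord :
    ∀ (x : Fin 2 × Fin 2) (l : List (Fin 2 × Fin 2)), Even l.length →
      ∃ h, h.length = l.length / 2 + 1 ∧ WordDistLE 1 (altWord x l) (pairsWord h)
  | x, [], _ => by
    refine ⟨[(x, 0)], rfl, ?_⟩
    have hsq : FillDistLE {ga ^ 2} otherRelators 1 0 (ga ^ 2) 1 := .of_mem_left rfl
    have h : WordDistLE 1 (kleinWord x) (kleinWord x * ga ^ 2) := by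
      simpa using (hsq.symm.mul_left (kleinWord x)).mono le_rfl zero_le_one
    simpa [altWord, pairsWord, pairWord, kleinWord, pow_two] using h
  | _, [_], hl => absurd hl (by simp)
  | x, y :: z :: l, hl => by
    obtain ⟨h, hh, hdist⟩ := exists_wordDistLE_altWord_pairsWord z l (by grind)
    refine ⟨(x, y) :: h, by grind, ?_⟩
    simpa only [altWord_cons, pairsWord, pairWord, List.map_cons, List.prod_cons, mul_assoc]
      using hdist.mul_left (kleinWord x * ga * kleinWord y * ga)

theorem exists_wordDistLE_word_pairsWord :
    ∃ K, ∀ w : List L4, proj (word w) = 1 → ∃ h, h.length = w.count .a / 2 + 1 ∧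
      proj (pairsWord h) = 1 ∧ WordDistLE (K * w.length + 1) (word w) (pairsWord h) := by
  obtain ⟨K, hK⟩ := exists_wordDistLE_word_altWord
  refine ⟨K, fun w hw => ?_⟩
  obtain ⟨x, l, hl, halt⟩ := hK w
  have heven := even_length_of_proj_altWord ((halt.map_eq ker_proj).symm.trans hw)
  obtain ⟨h, hh, hpairs⟩ := exists_wordDistLE_altWord_pairsWord x l heven
  have hdist := halt.trans hpairs
  exact ⟨h, hl ▸ hh, (hdist.map_eq ker_proj).symm.trans hw, hdist⟩

/-! ### Halving -/

/-- The letters `c` and `aca` of a word in `c`, `aca`, `d`, `ada`; among the letters of such a word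
they are the base letters, and `d` and `ada` are the left and the right letter. -/
def baseWord : Bool → F4
  | false => gc
  | true => ga * gc * ga

/-- The first component of a letter `c`, `aca`, `d`, `ada` under the wreath recursion. -/
def fstComponent : SplitLetter Bool → List L4
  | .base false => [.a]
  | .base true => [.d]
  | .left => []
  | .right => [.b]

/-- The second component of a letter `c`, `aca`, `d`, `ada` under the wreath recursion. -/
def sndComponent : SplitLetter Bool → List L4
  | .base false => [.d]
  | .base true => [.a]
  | .left => [.b]
  | .right => []

theorem freeWreathRecursion_evalWord (t : List (SplitLetter Bool)) :
    freeWreathRecursion (SplitLetter.evalWord baseWord gd (ga * gd * ga) t) =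
      diag (proj (word (t.flatMap fstComponent)), proj (word (t.flatMap sndComponent))) := by
  have hletter (x : SplitLetter Bool) :
      freeWreathRecursion (x.eval baseWord gd (ga * gd * ga)) =
        diag (proj (word (fstComponent x)), proj (word (sndComponent x))) := by
    rcases x with (_ | _) | _ | _ <;>
      simp [SplitLetter.eval, baseWord, fstComponent, sndComponent, word, mul_assoc]
  induction t with
  | nil => simp [SplitLetter.evalWord, word]
  | cons x t ih =>
    rw [SplitLetter.evalWord_cons, map_mul, hletter, ih, diag_mul_diag]
    simp only [word_flatMap, List.map_cons, List.prod_cons, map_mul]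

theorem evalWord_erase_right (t : List (SplitLetter Bool)) :
    SplitLetter.evalWord baseWord gd 1 t = sigma (word (t.flatMap sndComponent)) := by
  have hletter (x : SplitLetter Bool) :
      x.eval baseWord gd 1 = sigma (word (sndComponent x)) := by
    rcases x with (_ | _) | _ | _ <;> simp [SplitLetter.eval, baseWord, sndComponent, word]
  simp only [SplitLetter.evalWord, funext hletter, word_flatMap, map_list_prod, List.map_map,
    Function.comp_def]

theorem wordDistLE_evalWord_erase_left (t : List (SplitLetter Bool)) :
    WordDistLE t.length (SplitLetter.evalWord baseWord 1 (ga * gd * ga) t)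
      (MulAut.conj ga (sigma (word (t.flatMap fstComponent)))) := by
  have hsq : WordDistLE 1 (ga * ga) 1 :=
    pow_two ga ▸ .mono (.of_mem_left rfl) le_rfl zero_le_one
  have hinv : WordDistLE 1 ga ga⁻¹ := (wordDistLE_inv_of .a).symm
  have hletter (x : SplitLetter Bool) : WordDistLE 1 (x.eval baseWord 1 (ga * gd * ga))
      (MulAut.conj ga (sigma (word (fstComponent x)))) := by
    rcases x with (_ | _) | _ | _
    · simpa [SplitLetter.eval, baseWord, fstComponent, word, mul_assoc] using
        (hsq.mul_right gc).symm
    · simpa [SplitLetter.eval, baseWord, fstComponent, word] using hinv.mul_left (ga * gc)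
    · exact .mono (.of_eq (by simp [SplitLetter.eval, fstComponent, word])) zero_le_one zero_le_one
    · simpa [SplitLetter.eval, fstComponent, word] using hinv.mul_left (ga * gd)
  have h := FillDistLE.list_prod hletter t
  simpa only [SplitLetter.evalWord, word_flatMap, map_list_prod, List.map_map, one_mul,
    Function.comp_def] using h

theorem exists_wordDistLE_evalWord_one :
    ∃ K, ∀ (t : List (SplitLetter Bool)) (n : ℕ),
      proj (SplitLetter.evalWord baseWord gd (ga * gd * ga) t) = 1 →
      WordDistLE n (word (t.flatMap fstComponent)) 1 →
      WordDistLE n (word (t.flatMap sndComponent)) 1 →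
      WordDistLE (4 * n + K * (t.length + 1) ^ 2)
        (SplitLetter.evalWord baseWord gd (ga * gd * ga) t) 1 := by
  choose s hs using fun δ : DihedralGroup 4 => PresentedGroup.mk_surjective Rinf
    (dihedralLift C_mul_C C'_mul_C' C_mul_C'_pow_four δ)
  have hbase (i : Bool) : dihedralLift C_mul_C C'_mul_C' C_mul_C'_pow_four
      (bif i then .sr 1 else .sr 0) = proj (baseWord i) := by
    cases i
    · exact dihedralLift_sr_zero ..
    · exact dihedralLift_sr_one ..
  obtain ⟨K, hK⟩ := SplitForm.exists_fillDistLE_evalWord_one ker_proj hs hbase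
    (x := gd) (y := ga * gd * ga) commute_D_conj_dihedralLift_D'
  refine ⟨K + 1, fun t n ht hfst hsnd => ?_⟩
  have hright := (wordDistLE_evalWord_erase_left t).trans
    ((hfst.map_sigma.mul_left ga).mul_right ga⁻¹)
  have hleft := hsnd.map_sigma
  rw [map_one, mul_one, mul_inv_cancel] at hright
  rw [map_one, ← evalWord_erase_right] at hleft
  have hlen : t.length ≤ (t.length + 1) ^ 2 := by nlinarith
  exact (hK t _ _ _ _ ht hright hleft).mono (by linarith) (by linarith)

/-- The spelling of the word `x a y a`, for `x` and `y` in the four-group `{1, b, c, d}`, in the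
letters `c`, `d`, `aca`, `ada`. -/
def pairLetters (xy : (Fin 2 × Fin 2) × (Fin 2 × Fin 2)) : List (SplitLetter Bool) :=
  List.replicate xy.1.1.val (.base false) ++ List.replicate xy.1.2.val .left ++
    (List.replicate xy.2.1.val (.base true) ++ List.replicate xy.2.2.val .right)

theorem count_flatMap_le {α β : Type*} [BEq β] {f : α → List β} {b : β} {n : ℕ}
    (hf : ∀ a, (f a).count b ≤ n) (l : List α) : (l.flatMap f).count b ≤ n * l.length := by
  rw [List.count_flatMap, mul_comm]
  simpa using List.sum_le_card_nsmul (l.map (List.count b ∘ f)) n (by simpa using fun a _ => hf a)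

theorem length_flatMap_le {α β : Type*} {f : α → List β} {n : ℕ} (hf : ∀ a, (f a).length ≤ n)
    (l : List α) : (l.flatMap f).length ≤ n * l.length := by
  rw [List.length_flatMap, mul_comm]
  simpa using List.sum_le_card_nsmul (l.map fun a => (f a).length) n
    (by simpa using fun a _ => hf a)

theorem exists_wordDistLE_pairsWord_evalWord :
    ∃ K, ∀ h, WordDistLE (K * h.length) (pairsWord h)
      (SplitLetter.evalWord baseWord gd (ga * gd * ga) (h.flatMap pairLetters)) := by
  obtain ⟨K, hK⟩ := FillDistLE.exists_forall_of_map_eq ker_proj (f := pairWord)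
    (g := fun xy => SplitLetter.evalWord baseWord gd (ga * gd * ga) (pairLetters xy)) fun xy => by
      obtain ⟨⟨i, j⟩, k, l⟩ := xy
      fin_cases i, j, k, l <;> simp [pairWord, kleinWord, pairLetters, SplitLetter.evalWord,
        SplitLetter.eval, baseWord, mul_assoc]
  refine ⟨K, fun h => ?_⟩
  simpa only [pairsWord, SplitLetter.evalWord, prod_map_flatMap] using FillDistLE.list_prod hK h

theorem length_fstComponent_le (x : SplitLetter Bool) : (fstComponent x).length ≤ 1 := by
  rcases x with (_ | _) | _ | _ <;> simp [fstComponent]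

theorem length_sndComponent_le (x : SplitLetter Bool) : (sndComponent x).length ≤ 1 := by
  rcases x with (_ | _) | _ | _ <;> simp [sndComponent]

theorem exists_wordDistLE_flatMap_pairsWord :
    ∃ K, ∀ f : SplitLetter Bool → List L4, (∀ x, (f x).length ≤ 1) →
      (∀ xy, ((pairLetters xy).flatMap f).count .a ≤ 1) → ∀ h : List _,
      proj (word ((h.flatMap pairLetters).flatMap f)) = 1 → ∃ h',
        h'.length ≤ h.length / 2 + 1 ∧ proj (pairsWord h') = 1 ∧
        WordDistLE (K * (h.length + 1)) (word ((h.flatMap pairLetters).flatMap f))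
          (pairsWord h') := by
  obtain ⟨K, hK⟩ := exists_wordDistLE_word_pairsWord
  refine ⟨4 * K + 1, fun f hlen hcount h hh => ?_⟩
  obtain ⟨h', hlen', hnull, hdist⟩ := hK _ hh
  have hcount_le : ((h.flatMap pairLetters).flatMap f).count .a ≤ 1 * h.length := by
    rw [List.flatMap_assoc]
    exact count_flatMap_le hcount h
  have hlen_le : ((h.flatMap pairLetters).flatMap f).length ≤ 4 * h.length := by
    have := length_flatMap_le hlen (h.flatMap pairLetters)
    have := length_flatMap_le (f := pairLetters) (n := 4) (by decide) h
    lia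
  have hle := Nat.mul_le_mul_left K hlen_le
  exact ⟨h', by lia, hnull, hdist.mono (by nlinarith) (by nlinarith)⟩

theorem exists_pairsWord_components :
    ∃ K, ∀ h, proj (pairsWord h) = 1 → ∃ h₁ h₂,
      (h₁.length ≤ h.length / 2 + 1 ∧ proj (pairsWord h₁) = 1) ∧
      (h₂.length ≤ h.length / 2 + 1 ∧ proj (pairsWord h₂) = 1) ∧
      ∀ n, WordDistLE n (pairsWord h₁) 1 → WordDistLE n (pairsWord h₂) 1 →
        WordDistLE (4 * n + K * (h.length + 1) ^ 2) (pairsWord h) 1 := by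
  obtain ⟨k₁, letters_dist⟩ := exists_wordDistLE_pairsWord_evalWord
  obtain ⟨k₂, components_dist⟩ := exists_wordDistLE_evalWord_one
  obtain ⟨k₃, word_dist⟩ := exists_wordDistLE_flatMap_pairsWord
  refine ⟨k₁ + 16 * k₂ + 4 * k₃, fun h hh => ?_⟩
  have hnull := ((letters_dist h).map_eq ker_proj).symm.trans hh
  have hcomponents := freeWreathRecursion_evalWord (h.flatMap pairLetters)
  rw [freeWreathRecursion_eq_one hnull, ← diag_one_one] at hcomponents
  obtain ⟨hfst, hsnd⟩ := Prod.ext_iff.1 (diag_injective hcomponents)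
  obtain ⟨h₁, hlen₁, hnull₁, hdist₁⟩ :=
    word_dist fstComponent length_fstComponent_le (by decide) h hfst.symm
  obtain ⟨h₂, hlen₂, hnull₂, hdist₂⟩ :=
    word_dist sndComponent length_sndComponent_le (by decide) h hsnd.symm
  refine ⟨h₁, h₂, ⟨hlen₁, hnull₁⟩, ⟨hlen₂, hnull₂⟩, fun n hn₁ hn₂ => ?_⟩
  have hdist := (letters_dist h).trans <|
    components_dist _ (k₃ * (h.length + 1) + n) hnull (hdist₁.trans hn₁) (hdist₂.trans hn₂)
  have hsq : ((h.flatMap pairLetters).length + 1) ^ 2 ≤ (4 * (h.length + 1)) ^ 2 := by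
    have := length_flatMap_le (f := pairLetters) (n := 4) (by decide) h
    gcongr
    lia
  have hle : k₁ * h.length + (4 * (k₃ * (h.length + 1) + n) +
      k₂ * ((h.flatMap pairLetters).length + 1) ^ 2) ≤
        4 * n + (k₁ + 16 * k₂ + 4 * k₃) * (h.length + 1) ^ 2 :=
    calc
      _ ≤ k₁ * (h.length + 1) ^ 2 + (4 * (k₃ * (h.length + 1) ^ 2 + n) +
          k₂ * (4 * (h.length + 1)) ^ 2) := by
        gcongr
        · nlinarith
        · nlinarith
      _ = _ := by ring
  exact hdist.mono hle hle

/-! ### The recursion -/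

theorem exists_wordDistLE_pairsWord_of_length_le (m : ℕ) :
    ∃ K, ∀ h, h.length ≤ m → proj (pairsWord h) = 1 → WordDistLE K (pairsWord h) 1 := by
  have : Finite {h // h.length ≤ m ∧ proj (pairsWord h) = 1} :=
    (List.finite_length_le _ m).subset fun _ hh => hh.1
  obtain ⟨K, hK⟩ := FillDistLE.exists_forall_of_map_eq ker_proj
    (f := fun h : {h // h.length ≤ m ∧ proj (pairsWord h) = 1} => pairsWord h) (g := fun _ => 1)
    fun h => h.2.2.trans (map_one proj).symm
  exact ⟨K, fun h hlen hnull => hK ⟨h, hlen, hnull⟩⟩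

-- The bound `2 ^ k + 2` on the number of pairs is preserved by `m ↦ m / 2 + 1`. Each halving
-- multiplies the cost by four, so that every level of the recursion contributes about `4 ^ k`.
theorem exists_wordDistLE_pairsWord_one :
    ∃ K, ∀ k h, h.length ≤ 2 ^ k + 2 → proj (pairsWord h) = 1 →
      WordDistLE (K * (k + 1) * 4 ^ k) (pairsWord h) 1 := by
  obtain ⟨k₀, short_dist⟩ := exists_wordDistLE_pairsWord_of_length_le 3
  obtain ⟨k₁, halving⟩ := exists_pairsWord_components
  refine ⟨k₀ + 16 * k₁, fun k => ?_⟩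
  induction k with
  | zero => exact fun h hlen hnull => (short_dist h hlen hnull).mono (by lia) (by lia)
  | succ k ih =>
    intro h hlen hnull
    obtain ⟨h₁, h₂, ⟨hlen₁, hnull₁⟩, ⟨hlen₂, hnull₂⟩, hdist⟩ := halving h hnull
    rw [pow_succ] at hlen
    have hle : 4 * ((k₀ + 16 * k₁) * (k + 1) * 4 ^ k) + k₁ * (h.length + 1) ^ 2 ≤
        (k₀ + 16 * k₁) * (k + 1 + 1) * 4 ^ (k + 1) :=
      have hlen' : h.length + 1 ≤ 8 * 2 ^ k := by
        have := Nat.one_le_two_pow (n := k)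
        lia
      calc
        _ ≤ 4 * ((k₀ + 16 * k₁) * (k + 1) * 4 ^ k) + k₁ * (8 * 2 ^ k) ^ 2 := by gcongr
        _ = 4 * ((k₀ + 16 * k₁) * (k + 1) * 4 ^ k) + 64 * k₁ * 4 ^ k := by
          rw [mul_pow, ← pow_mul, mul_comm k, pow_mul]
          ring
        _ ≤ _ := by
          rw [pow_succ]
          nlinarith [Nat.zero_le (k₀ * 4 ^ k)]
    exact (hdist _ (ih h₁ (by lia) hnull₁) (ih h₂ (by lia) hnull₂)).mono hle hle

theorem exists_wordDistLE_one_of_norm_le :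
    ∃ K, ∀ (k : ℕ) (W : F4), proj W = 1 → W.norm ≤ 2 ^ (k + 1) →
      WordDistLE (K * (k + 1) * 4 ^ k) W 1 := by
  obtain ⟨k₁, pairs_dist⟩ := exists_wordDistLE_word_pairsWord
  obtain ⟨k₂, null_dist⟩ := exists_wordDistLE_pairsWord_one
  refine ⟨2 * k₁ + k₂ + 3, fun k W hW hnorm => ?_⟩
  have hword := wordDistLE_word_map_fst_toWord W
  obtain ⟨h, hlen, hnull, hpairs⟩ := pairs_dist _ ((hword.map_eq ker_proj).symm.trans hW)
  have hlength : (W.toWord.map Prod.fst).length = W.norm := List.length_map ..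
  have hcount : (W.toWord.map Prod.fst).count .a ≤ W.norm := hlength ▸ List.count_le_length
  rw [hlength] at hpairs
  rw [pow_succ] at hnorm
  have hle : W.norm + (k₁ * W.norm + 1) + k₂ * (k + 1) * 4 ^ k ≤
      (2 * k₁ + k₂ + 3) * (k + 1) * 4 ^ k :=
    have h24 : 2 ^ k ≤ 4 ^ k := Nat.pow_le_pow_left (by norm_num) k
    have h4 : 1 ≤ (k + 1) * 4 ^ k := Nat.mul_pos k.succ_pos (by positivity)
    have hnorm' : W.norm ≤ 2 * ((k + 1) * 4 ^ k) := by nlinarith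
    calc
      _ ≤ 2 * ((k + 1) * 4 ^ k) + (k₁ * (2 * ((k + 1) * 4 ^ k)) + (k + 1) * 4 ^ k) +
          k₂ * (k + 1) * 4 ^ k := by gcongr
      _ = _ := by ring
  exact ((hword.trans hpairs).trans (null_dist k h (by lia) hnull)).mono hle hle

theorem natLog_add_one_mul_four_pow_le {x : ℕ} (hx : 2 ≤ x) :
    ((Nat.log 2 x + 1) * 4 ^ Nat.log 2 x : ℝ) ≤ 2 * x ^ 2 * Real.logb 2 x := by
  have hx₂ : (2 : ℝ) ≤ x := by exact_mod_cast hx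
  have hpow : (2 : ℝ) ^ Nat.log 2 x ≤ x := by exact_mod_cast Nat.pow_log_le_self 2 (by lia)
  have hlog : (Nat.log 2 x : ℝ) ≤ Real.logb 2 x := Real.natLog_le_logb x 2
  have hone : 1 ≤ Real.logb 2 x := by
    rw [Real.le_logb_iff_rpow_le (by norm_num) (by linarith), Real.rpow_one]
    exact hx₂
  calc
    ((Nat.log 2 x + 1) * 4 ^ Nat.log 2 x : ℝ)
      = (Nat.log 2 x + 1) * (2 ^ Nat.log 2 x) ^ 2 := by
        rw [← pow_mul, mul_comm _ 2, pow_mul]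
        norm_num
    _ ≤ (Real.logb 2 x + Real.logb 2 x) * x ^ 2 := by gcongr
    _ = 2 * x ^ 2 * Real.logb 2 x := by ring

end Grigorchuk

/-- the Dehn 2-function of the Lysenok presentation of the
Grigorchuk 2-group `Γ` is bounded from above by `C₁ x² log₂ x`. -/
theorem grigorchuk_dehn_function_upper_bound :
    ∃ C₁ : ℝ, 1 < C₁ ∧
      ∀ x : ℕ, 2 ≤ x →
        ∀ W ∈ Subgroup.normalClosure Rinf, FreeGroup.norm W ≤ x →
          ∃ L : ℕ, (L : ℝ) ≤ C₁ * (x : ℝ) ^ 2 * Real.logb 2 (x : ℝ) ∧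
            IsProdConjPM Rinf L W := by
  obtain ⟨K, hK⟩ := Grigorchuk.exists_wordDistLE_one_of_norm_le
  refine ⟨4 * K + 2, by linarith [K.cast_nonneg (α := ℝ)], fun x hx W hW hnorm => ?_⟩
  have hproj : Grigorchuk.proj W = 1 := PresentedGroup.mk_eq_one_iff.2 hW
  have hnorm_le : W.norm ≤ 2 ^ (Nat.log 2 x + 1) :=
    hnorm.trans (Nat.lt_pow_succ_log_self one_lt_two x).le
  obtain ⟨L, hL, hW'⟩ := (hK (Nat.log 2 x) W hproj hnorm_le).exists_isProdConjPM
  refine ⟨L, ?_, by simpa using hW'⟩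
  have hlog : 0 ≤ (x : ℝ) ^ 2 * Real.logb 2 x :=
    mul_nonneg (sq_nonneg _) (Real.logb_nonneg one_lt_two (by exact_mod_cast (by lia : 1 ≤ x)))
  calc
    (L : ℝ) ≤ 2 * (K * (Nat.log 2 x + 1) * 4 ^ Nat.log 2 x) := by exact_mod_cast hL
    _ = 2 * K * ((Nat.log 2 x + 1) * 4 ^ Nat.log 2 x) := by ring
    _ ≤ 2 * K * (2 * x ^ 2 * Real.logb 2 x) :=
      mul_le_mul_of_nonneg_left (Grigorchuk.natLog_add_one_mul_four_pow_le hx) (by positivity)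
    _ ≤ (4 * K + 2) * x ^ 2 * Real.logb 2 x := by linarith
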